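/- arXiv:0809.3168 — 3 statements merged into one kernel-verified Lean document; each statement's English description precedes it below -/
import Mathlib

section
/- Let n, m ≥ 1, let f_n : ℕⁿ → ℝ and g_m : ℕᵐ → ℝ be symmetric with finite support. If n ≠ m then E[J_n(f_n) J_m(g_m)] = 0, and if n = m then E[J_n(f_n) J_n(g_n)] = n! · Σ_{(i_1,…,i_n)∈Δ_n} f_n(i_1,…,i_n) g_n(i_1,…,i_n). -/
open MeasureTheory
open scoped Classical

/-- The discrete multiple stochastic integral
`J_n(f_n) = ∑_{(i_1,…,i_n) ∈ Δ_n} f_n(i_1,…,i_n) Y_{i_1} ⋯ Y_{i_n}`,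
where `Δ_n` is the set of `n`-tuples of pairwise distinct indices. -/
noncomputable def multipleInt {Ω : Type*} (Y : ℕ → Ω → ℝ) {n : ℕ}
    (f : (Fin n → ℕ) → ℝ) (ω : Ω) : ℝ :=
  ∑' i : Fin n → ℕ, if Function.Injective i then f i * ∏ j, Y (i j) ω else 0

/-!
The products `∏ k ∈ S, Y k`, indexed by finite sets `S`, are orthonormal in `L²`. Indeed, let `a` be
the largest index occurring in `(∏ k ∈ S, Y k) * ∏ k ∈ T, Y k` and condition on the past of `a`: if
`a` lies in only one of `S` and `T`, the expectation vanishes because `Y a` has conditional mean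
zero; if it lies in both, the factor `Y a ^ 2` may be dropped because its conditional mean is one.
The same conditioning of `P ^ 2 * Y a ^ 2` shows inductively that these products are square
integrable.

An injective tuple `i` contributes the product over its image, so a pair `(i, j)` survives in
`E[J_n(f) J_m(g)]` exactly when `i` and `j` have the same image. This forces `n = m` and
`j = i ∘ σ` for a unique permutation `σ`, and symmetry of `g` gives the factor `n!`.
-/

open scoped ENNReal

section PullOut

variable {Ω : Type*} {m mΩ : MeasurableSpace Ω} {μ : Measure Ω}

theorem lintegral_mul_condLExp (hm : m ≤ mΩ) [SigmaFinite (μ.trim hm)] {φ X : Ω → ℝ≥0∞}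
    (hφ : Measurable[m] φ) (hX : AEMeasurable X μ) :
    ∫⁻ ω, φ ω * μ⁻[X|m] ω ∂μ = ∫⁻ ω, φ ω * X ω ∂μ := by
  have trim_eq : (μ.withDensity μ⁻[X|m]).trim hm = (μ.withDensity X).trim hm := by
    refine @Measure.ext _ m _ _ fun s hs => ?_
    simp only [trim_measurableSet_eq hm hs, withDensity_apply _ (hm s hs),
      setLIntegral_condLExp hm μ X hs]
  have lintegral_density {Z : Ω → ℝ≥0∞} (hZ : AEMeasurable Z μ) :
      ∫⁻ ω, φ ω * Z ω ∂μ = ∫⁻ ω, φ ω ∂(μ.withDensity Z).trim hm := by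
    rw [lintegral_trim hm hφ,
      lintegral_withDensity_eq_lintegral_mul₀ hZ (hφ.mono hm le_rfl).aemeasurable]
    simp only [Pi.mul_apply, mul_comm]
  rw [lintegral_density (measurable_condLExp' m μ X).aemeasurable, lintegral_density hX, trim_eq]

theorem integrable_mul_of_integrable_mul_condExp (hm : m ≤ mΩ) [SigmaFinite (μ.trim hm)]
    {P Z : Ω → ℝ} (hP : StronglyMeasurable[m] P) (hZ : Integrable Z μ) (hZ_nonneg : 0 ≤ᵐ[μ] Z)
    (hPZ : Integrable (P * μ[Z | m]) μ) : Integrable (P * Z) μ := by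
  refine ⟨(hP.mono hm).aestronglyMeasurable.mul hZ.aestronglyMeasurable, ?_⟩
  have lintegral_enorm_eq : ∫⁻ ω, ‖(P * Z) ω‖ₑ ∂μ = ∫⁻ ω, ‖(P * μ[Z | m]) ω‖ₑ ∂μ := by
    simp only [Pi.mul_apply, enorm_mul]
    rw [← lintegral_mul_condLExp hm hP.enorm hZ.aestronglyMeasurable.enorm]
    refine lintegral_congr_ae ?_
    filter_upwards [condLExp_enorm m hZ hZ_nonneg] with ω hω
    rw [hω]
  rw [hasFiniteIntegral_def, lintegral_enorm_eq]
  exact hPZ.hasFiniteIntegral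

theorem integral_mul_condExp (hm : m ≤ mΩ) [SigmaFinite (μ.trim hm)] {P X : Ω → ℝ}
    (hP : StronglyMeasurable[m] P) (hX : Integrable X μ) (hPX : Integrable (P * X) μ) :
    ∫ ω, (P * μ[X | m]) ω ∂μ = ∫ ω, (P * X) ω ∂μ := by
  rw [← integral_condExp hm (f := P * X)]
  exact integral_congr_ae (condExp_mul_of_stronglyMeasurable_left hP hPX hX).symm

end PullOut

/-- The increments `Y` of a discrete normal martingale: each `Y k` has conditional mean `0` and
conditional variance `1` given the information `𝓕 k` strictly preceding time `k`. The family `𝓕`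
is indexed predictably: `𝓕 n` knows `Y k` for `k < n`, but need not know `Y n`. -/
structure IsNormalMartingaleDifference {ι Ω : Type*} [LinearOrder ι] {mΩ : MeasurableSpace Ω}
    (Y : ι → Ω → ℝ) (𝓕 : ι → MeasurableSpace Ω) (μ : Measure Ω) : Prop where
  le : ∀ n, 𝓕 n ≤ mΩ
  measurable_of_lt : ∀ {k n}, k < n → Measurable[𝓕 n] (Y k)
  condExp_eq_zero : ∀ n, μ[Y n | 𝓕 n] =ᵐ[μ] 0
  condExp_sq_eq_one : ∀ n, μ[Y n ^ 2 | 𝓕 n] =ᵐ[μ] 1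

namespace IsNormalMartingaleDifference

variable {ι Ω : Type*} [LinearOrder ι] {mΩ : MeasurableSpace Ω} {μ : Measure Ω}
  {Y : ι → Ω → ℝ} {𝓕 : ι → MeasurableSpace Ω} {a : ι} {P : Ω → ℝ} {S T : Finset ι}

theorem measurable_prod (hY : IsNormalMartingaleDifference Y 𝓕 μ) (hS : ∀ k ∈ S, k < a) :
    Measurable[𝓕 a] (∏ k ∈ S, Y k) :=
  Finset.prod_fn S Y ▸ Finset.measurable_prod S fun k hk => hY.measurable_of_lt (hS k hk)

theorem measurable [NoMaxOrder ι] (hY : IsNormalMartingaleDifference Y 𝓕 μ) (k : ι) :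
    Measurable (Y k) :=
  let ⟨n, hkn⟩ := exists_gt k
  (hY.measurable_of_lt hkn).mono (hY.le n) le_rfl

theorem integrable_sq (hY : IsNormalMartingaleDifference Y 𝓕 μ) (k : ι) :
    Integrable (Y k ^ 2) μ := by
  rcases eq_zero_or_neZero μ with rfl | _
  · exact integrable_zero_measure
  -- The conditional expectation of a non-integrable function is `0` by convention.
  by_contra not_integrable
  have zero_eq_one : (0 : Ω → ℝ) =ᵐ[μ] 1 := by
    simpa only [condExp_of_not_integrable not_integrable] using hY.condExp_sq_eq_one k
  obtain ⟨_, hω⟩ := zero_eq_one.exists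
  exact zero_ne_one hω

variable [NoMaxOrder ι]

section FiniteMeasure

variable [IsFiniteMeasure μ]

theorem memLp_two_mul (hY : IsNormalMartingaleDifference Y 𝓕 μ) (hP : Measurable[𝓕 a] P)
    (hP_memLp : MemLp P 2 μ) : MemLp (P * Y a) 2 μ := by
  have hPY : AEStronglyMeasurable (P * Y a) μ :=
    hP_memLp.aestronglyMeasurable.mul (hY.measurable a).aestronglyMeasurable
  have hP_condExp : Integrable (P ^ 2 * μ[Y a ^ 2 | 𝓕 a]) μ := by
    refine hP_memLp.integrable_sq.congr ?_
    filter_upwards [hY.condExp_sq_eq_one a] with ω hω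
    simp only [Pi.mul_apply, Pi.pow_apply, Pi.one_apply, hω, mul_one]
  have integrable_sq_mul_sq : Integrable (P ^ 2 * Y a ^ 2) μ :=
    integrable_mul_of_integrable_mul_condExp (hY.le a) (hP.pow_const 2).stronglyMeasurable
      (hY.integrable_sq a) (.of_forall fun ω => sq_nonneg (Y a ω)) hP_condExp
  rw [← mul_pow] at integrable_sq_mul_sq
  exact (memLp_two_iff_integrable_sq hPY).2 integrable_sq_mul_sq

theorem memLp_two_prod (hY : IsNormalMartingaleDifference Y 𝓕 μ) (S : Finset ι) :
    MemLp (∏ k ∈ S, Y k) 2 μ := by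
  induction S using Finset.induction_on_max with
  | empty => exact memLp_const 1
  | insert a S hS ih =>
    rw [Finset.prod_insert fun ha => (hS a ha).false, mul_comm]
    exact hY.memLp_two_mul (hY.measurable_prod hS) ih

theorem integrable_prod_mul_prod (hY : IsNormalMartingaleDifference Y 𝓕 μ) (S T : Finset ι) :
    Integrable ((∏ k ∈ S, Y k) * ∏ k ∈ T, Y k) μ :=
  (hY.memLp_two_prod S).integrable_mul (hY.memLp_two_prod T)

theorem integral_prod_insert_mul_prod (hY : IsNormalMartingaleDifference Y 𝓕 μ)
    (hS : ∀ k ∈ S, k < a) (hT : ∀ k ∈ T, k < a) :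
    ∫ ω, ((∏ k ∈ insert a S, Y k) * ∏ k ∈ T, Y k) ω ∂μ = 0 := by
  have factor : (∏ k ∈ insert a S, Y k) * ∏ k ∈ T, Y k
      = ((∏ k ∈ S, Y k) * ∏ k ∈ T, Y k) * Y a := by
    rw [Finset.prod_insert fun ha => (hS a ha).false]
    ring
  have hint := hY.integrable_prod_mul_prod (insert a S) T
  have hYa : Integrable (Y a) μ := by
    simpa using (hY.memLp_two_prod {a}).integrable one_le_two
  rw [factor] at hint ⊢
  rw [← integral_mul_condExp (hY.le a)
    ((hY.measurable_prod hS).mul (hY.measurable_prod hT)).stronglyMeasurable hYa hint]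
  refine integral_eq_zero_of_ae ?_
  filter_upwards [hY.condExp_eq_zero a] with ω hω
  simp only [Pi.mul_apply, hω, Pi.zero_apply, mul_zero]

theorem integral_prod_insert_mul_prod_insert (hY : IsNormalMartingaleDifference Y 𝓕 μ)
    (hS : ∀ k ∈ S, k < a) (hT : ∀ k ∈ T, k < a) :
    ∫ ω, ((∏ k ∈ insert a S, Y k) * ∏ k ∈ insert a T, Y k) ω ∂μ
      = ∫ ω, ((∏ k ∈ S, Y k) * ∏ k ∈ T, Y k) ω ∂μ := by
  have factor : (∏ k ∈ insert a S, Y k) * ∏ k ∈ insert a T, Y k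
      = ((∏ k ∈ S, Y k) * ∏ k ∈ T, Y k) * Y a ^ 2 := by
    rw [Finset.prod_insert fun ha => (hS a ha).false, Finset.prod_insert fun ha => (hT a ha).false]
    ring
  have hint := hY.integrable_prod_mul_prod (insert a S) (insert a T)
  rw [factor] at hint ⊢
  rw [← integral_mul_condExp (hY.le a)
    ((hY.measurable_prod hS).mul (hY.measurable_prod hT)).stronglyMeasurable
    (hY.integrable_sq a) hint]
  refine integral_congr_ae ?_
  filter_upwards [hY.condExp_sq_eq_one a] with ω hω
  simp only [Pi.mul_apply, hω, Pi.one_apply, mul_one]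

end FiniteMeasure

theorem integral_prod_mul_prod [IsProbabilityMeasure μ]
    (hY : IsNormalMartingaleDifference Y 𝓕 μ) (S T : Finset ι) :
    ∫ ω, ((∏ k ∈ S, Y k) * ∏ k ∈ T, Y k) ω ∂μ = if S = T then 1 else 0 := by
  suffices of_subset : ∀ U : Finset ι, ∀ S ⊆ U, ∀ T ⊆ U,
      ∫ ω, ((∏ k ∈ S, Y k) * ∏ k ∈ T, Y k) ω ∂μ = if S = T then 1 else 0 from
    of_subset (S ∪ T) S Finset.subset_union_left T Finset.subset_union_right
  intro U
  induction U using Finset.induction_on_max with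
  | empty => simp +contextual [Finset.subset_empty]
  | insert a U hU ih =>
    intro S hS T hT
    have lt_of_mem_erase {R : Finset ι} (hR : R ⊆ insert a U) : ∀ k ∈ R.erase a, k < a :=
      fun k hk => hU k (Finset.subset_insert_iff.1 hR hk)
    by_cases haS : a ∈ S <;> by_cases haT : a ∈ T
    · have hlast :=
        hY.integral_prod_insert_mul_prod_insert (lt_of_mem_erase hS) (lt_of_mem_erase hT)
      rw [Finset.insert_erase haS, Finset.insert_erase haT] at hlast
      rw [hlast, ih _ (Finset.subset_insert_iff.1 hS) _ (Finset.subset_insert_iff.1 hT)]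
      simp only [Finset.insert_erase_invOn.1.injOn.eq_iff haS haT]
    · rw [if_neg (by grind), ← Finset.insert_erase haS, ← Finset.erase_eq_of_notMem haT]
      exact hY.integral_prod_insert_mul_prod (lt_of_mem_erase hS) (lt_of_mem_erase hT)
    · rw [if_neg (by grind), mul_comm, ← Finset.insert_erase haT,
        ← Finset.erase_eq_of_notMem haS]
      exact hY.integral_prod_insert_mul_prod (lt_of_mem_erase hT) (lt_of_mem_erase hS)
    · exact ih S ((Finset.subset_insert_iff_of_notMem haS).1 hS)
        T ((Finset.subset_insert_iff_of_notMem haT).1 hT)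

end IsNormalMartingaleDifference

section Rearrangements

variable {κ α R : Type*} [Fintype κ] [DecidableEq α] {i j : κ → α}

theorem exists_perm_comp_eq_of_image_eq (hi : i.Injective) (hj : j.Injective)
    (h : Finset.univ.image j = Finset.univ.image i) : ∃ σ : Equiv.Perm κ, i ∘ σ = j := by
  have range_eq : Set.range j = Set.range i := by
    simpa only [← Finset.coe_inj, Finset.coe_image, Finset.coe_univ, Set.image_univ] using h
  refine ⟨((Equiv.ofInjective j hj).trans (Equiv.setCongr range_eq)).trans
    (Equiv.ofInjective i hi).symm, funext fun k => ?_⟩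
  simp [Equiv.apply_ofInjective_symm]

theorem sum_filter_image_eq_sum_perm [DecidableEq κ] [AddCommMonoid R]
    {g : (κ → α) → R} (hg : g.support.Finite) (hi : i.Injective) :
    ∑ j ∈ hg.toFinset with j.Injective ∧ Finset.univ.image j = Finset.univ.image i, g j
      = ∑ σ : Equiv.Perm κ, g (i ∘ σ) := by
  have comp_injective : Function.Injective fun σ : Equiv.Perm κ => i ∘ σ :=
    hi.comp_left.comp DFunLike.coe_injective
  rw [← Finset.sum_image (f := g) comp_injective.injOn]
  refine Finset.sum_subset (fun j hj => ?_) fun j hj hj_notMem => ?_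
  · obtain ⟨-, hj_inj, hji⟩ := Finset.mem_filter.1 hj
    obtain ⟨σ, rfl⟩ := exists_perm_comp_eq_of_image_eq hi hj_inj hji
    exact Finset.mem_image_of_mem _ (Finset.mem_univ σ)
  · obtain ⟨σ, -, rfl⟩ := Finset.mem_image.1 hj
    by_contra hgσ
    refine hj_notMem (Finset.mem_filter.2 ⟨hg.mem_toFinset.2 hgσ, hi.comp σ.injective, ?_⟩)
    rw [← Finset.image_image, Finset.image_univ_equiv]

end Rearrangements

theorem measurable_of_lt_of_eq_comap {Ω E : Type*} [MeasurableSpace E] {Y : ℕ → Ω → E}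
    {𝓕 : ℕ → MeasurableSpace Ω}
    (h𝓕succ : ∀ n, 𝓕 (n + 1) =
      MeasurableSpace.comap (fun ω (i : Fin (n + 1)) => Y i ω) inferInstance)
    {k n : ℕ} (hkn : k < n) : Measurable[𝓕 n] (Y k) := by
  obtain ⟨n, rfl⟩ := Nat.exists_eq_add_one_of_ne_zero (Nat.ne_zero_of_lt hkn)
  rw [h𝓕succ]
  exact (measurable_pi_apply (X := fun _ => E) (⟨k, hkn⟩ : Fin (n + 1))).comp (comap_measurable _)

section MultipleInt

variable {Ω : Type*} {n m : ℕ} {f : (Fin n → ℕ) → ℝ} {g : (Fin m → ℕ) → ℝ}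

theorem multipleInt_eq_sum (Y : ℕ → Ω → ℝ) (hf : f.support.Finite) :
    multipleInt Y f
      = ∑ i ∈ hf.toFinset with i.Injective, f i • ∏ k ∈ Finset.univ.image i, Y k := by
  ext ω
  simp only [multipleInt, Finset.sum_apply, Finset.sum_filter]
  rw [tsum_eq_sum (s := hf.toFinset) fun i hi => by simp_all]
  refine Finset.sum_congr rfl fun i _ => ?_
  split_ifs with hi
  · simp [Finset.prod_image hi.injOn]
  · rfl

variable {mΩ : MeasurableSpace Ω} {μ : Measure Ω} {Y : ℕ → Ω → ℝ} {𝓕 : ℕ → MeasurableSpace Ω}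

theorem memLp_two_multipleInt [IsFiniteMeasure μ] (hY : IsNormalMartingaleDifference Y 𝓕 μ)
    (hf : f.support.Finite) : MemLp (multipleInt Y f) 2 μ := by
  rw [multipleInt_eq_sum Y hf]
  exact memLp_finsetSum' _ fun i _ => (hY.memLp_two_prod _).const_smul (f i)

variable [IsProbabilityMeasure μ]

theorem integral_multipleInt_mul_multipleInt (hY : IsNormalMartingaleDifference Y 𝓕 μ)
    (hf : f.support.Finite) (hg : g.support.Finite) :
    ∫ ω, multipleInt Y f ω * multipleInt Y g ω ∂μ
      = ∑ i ∈ hf.toFinset with i.Injective, f i *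
          ∑ j ∈ hg.toFinset with j.Injective ∧ Finset.univ.image j = Finset.univ.image i, g j := by
  have expand (ω : Ω) : multipleInt Y f ω * multipleInt Y g ω
      = ∑ i ∈ hf.toFinset with i.Injective, ∑ j ∈ hg.toFinset with j.Injective,
          f i * g j * ((∏ k ∈ Finset.univ.image i, Y k) * ∏ k ∈ Finset.univ.image j, Y k) ω := by
    simp only [multipleInt_eq_sum Y hf, multipleInt_eq_sum Y hg, Finset.sum_apply,
      Finset.sum_mul_sum, Pi.smul_apply, Pi.mul_apply, smul_eq_mul, mul_mul_mul_comm]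
  have hint (i : Fin n → ℕ) (j : Fin m → ℕ) := (hY.integrable_prod_mul_prod
    (Finset.univ.image i) (Finset.univ.image j)).const_mul (f i * g j)
  simp only [expand]
  rw [integral_finsetSum _ fun i _ => integrable_finsetSum _ fun j _ => hint i j]
  refine Finset.sum_congr rfl fun i _ => ?_
  rw [integral_finsetSum _ fun j _ => hint i j, Finset.mul_sum, ← Finset.filter_filter,
    Finset.sum_filter (p := fun j => Finset.univ.image j = _)]
  refine Finset.sum_congr rfl fun j _ => ?_
  rw [integral_const_mul, hY.integral_prod_mul_prod, mul_ite, mul_one, mul_zero]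
  simp only [eq_comm]

theorem integral_multipleInt_mul_multipleInt_of_ne (hY : IsNormalMartingaleDifference Y 𝓕 μ)
    (hf : f.support.Finite) (hg : g.support.Finite) (hnm : n ≠ m) :
    ∫ ω, multipleInt Y f ω * multipleInt Y g ω ∂μ = 0 := by
  rw [integral_multipleInt_mul_multipleInt hY hf hg]
  refine Finset.sum_eq_zero fun i hi => ?_
  have image_ne {j : Fin m → ℕ} (hj : j.Injective) :
      Finset.univ.image j ≠ Finset.univ.image i := by
    intro h
    have card_eq := congrArg Finset.card h
    rw [Finset.card_image_of_injective _ hj,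
      Finset.card_image_of_injective _ (Finset.mem_filter.1 hi).2, Finset.card_fin,
      Finset.card_fin] at card_eq
    exact hnm card_eq.symm
  rw [Finset.filter_false_of_mem fun j _ hj => image_ne hj.1 hj.2, Finset.sum_empty, mul_zero]

theorem integral_multipleInt_mul_multipleInt_eq_tsum_perm {g : (Fin n → ℕ) → ℝ}
    (hY : IsNormalMartingaleDifference Y 𝓕 μ) (hf : f.support.Finite) (hg : g.support.Finite) :
    ∫ ω, multipleInt Y f ω * multipleInt Y g ω ∂μ
      = ∑' i : Fin n → ℕ,
          if i.Injective then f i * ∑ σ : Equiv.Perm (Fin n), g (i ∘ σ) else 0 := by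
  rw [integral_multipleInt_mul_multipleInt hY hf hg,
    tsum_eq_sum (s := hf.toFinset) fun i hi => by simp_all, ← Finset.sum_filter]
  refine Finset.sum_congr rfl fun i hi => ?_
  rw [sum_filter_image_eq_sum_perm hg (Finset.mem_filter.1 hi).2]

theorem multipleInt_isometry_general (hY : IsNormalMartingaleDifference Y 𝓕 μ)
    (hgsymm : ∀ (σ : Equiv.Perm (Fin m)) (i : Fin m → ℕ), g (i ∘ σ) = g i)
    (hf : f.support.Finite) (hg : g.support.Finite) :
    Integrable (fun ω => multipleInt Y f ω * multipleInt Y g ω) μ ∧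
      (n ≠ m → ∫ ω, multipleInt Y f ω * multipleInt Y g ω ∂μ = 0) ∧
      ∀ (h : n = m),
        ∫ ω, multipleInt Y f ω * multipleInt Y g ω ∂μ
          = (Nat.factorial n : ℝ) * ∑' i : Fin n → ℕ,
              if Function.Injective i then f i * g (fun j => i (Fin.cast h.symm j)) else 0 := by
  refine ⟨(memLp_two_multipleInt hY hf).integrable_mul (memLp_two_multipleInt hY hg),
    integral_multipleInt_mul_multipleInt_of_ne hY hf hg, ?_⟩
  rintro rfl
  rw [integral_multipleInt_mul_multipleInt_eq_tsum_perm hY hf hg, ← tsum_mul_left]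
  simp [hgsymm, Fintype.card_perm, mul_left_comm]

end MultipleInt

/-- **Isometry and orthogonality of multiple stochastic integrals.**
`𝓕 n` plays the role of the σ-algebra `𝓕_{n-1}` of the paper.  For symmetric finitely
supported `f_n : ℕⁿ → ℝ`, `g_m : ℕᵐ → ℝ` with `n, m ≥ 1`:
if `n ≠ m` then `E[J_n(f_n) J_m(g_m)] = 0`, and if `n = m` then
`E[J_n(f_n) J_n(g_n)] = n! ∑_{(i_1,…,i_n) ∈ Δ_n} f_n(i_1,…,i_n) g_n(i_1,…,i_n)`. -/
theorem multipleInt_isometry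
    {Ω : Type*} {mΩ : MeasurableSpace Ω} (μ : Measure Ω) [IsProbabilityMeasure μ]
    (Y : ℕ → Ω → ℝ) (hYmeas : ∀ k, Measurable (Y k))
    (hYbdd : ∀ k, ∃ C : ℝ, ∀ ω, |Y k ω| ≤ C)
    (𝓕 : ℕ → MeasurableSpace Ω)
    (h𝓕0 : 𝓕 0 = ⊥)
    (h𝓕succ : ∀ n, 𝓕 (n + 1) =
      MeasurableSpace.comap (fun ω (i : Fin (n + 1)) => Y i ω) inferInstance)
    (h𝓕le : ∀ n, 𝓕 n ≤ mΩ)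
    (hY0 : ∀ n, μ[Y n | 𝓕 n] =ᵐ[μ] 0)
    (hY1 : ∀ n, μ[fun ω => (Y n ω) ^ 2 | 𝓕 n] =ᵐ[μ] fun _ => 1)
    (n m : ℕ) (hn : 1 ≤ n) (hm : 1 ≤ m)
    (f : (Fin n → ℕ) → ℝ) (g : (Fin m → ℕ) → ℝ)
    (hfsymm : ∀ (σ : Equiv.Perm (Fin n)) (i : Fin n → ℕ), f (i ∘ σ) = f i)
    (hgsymm : ∀ (σ : Equiv.Perm (Fin m)) (i : Fin m → ℕ), g (i ∘ σ) = g i)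
    (hffin : (Function.support f).Finite)
    (hgfin : (Function.support g).Finite) :
    (n ≠ m → ∫ ω, multipleInt Y f ω * multipleInt Y g ω ∂μ = 0) ∧
      ∀ (h : n = m),
        ∫ ω, multipleInt Y f ω * multipleInt Y g ω ∂μ
          = (Nat.factorial n : ℝ) * ∑' i : Fin n → ℕ,
              if Function.Injective i then f i * g (fun j => i (Fin.cast h.symm j)) else 0 := by
  exact (multipleInt_isometry_general ⟨h𝓕le, measurable_of_lt_of_eq_comap h𝓕succ, hY0, hY1⟩
    hgsymm hffin hgfin).2
end

section
/- Let n ≥ 1, let f_n : ℕⁿ → ℝ be symmetric with finite support, and let k ∈ ℕ. Then E[J_n(f_n) | 𝓕_k] = J_n(f_n·1_{[0,k]ⁿ}) almost surely, where (f_n·1_{[0,k]ⁿ})(i_1,…,i_n) equals f_n(i_1,…,i_n) if i_j ≤ k for all j, and 0 otherwise. -/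
open MeasureTheory
open scoped Classical

/-!
By linearity it suffices to treat a single product `Y_{i_1} ⋯ Y_{i_n}` of factors with distinct
indices. If all indices are at most `k`, the product is `𝓕_k`-measurable. Otherwise its largest
index `m` exceeds `k`; all other factors are `𝓕_{m-1}`-measurable, so conditioning first on
`𝓕_{m-1}` and pulling them out leaves `E[Y_m | 𝓕_{m-1}] = 0`.
-/

section CondExpProd

variable {Ω ι 𝔸 : Type*} {mΩ : MeasurableSpace Ω} {μ : Measure Ω} [LinearOrder ι]
  {𝓕 : Filtration ι mΩ} [NormedCommRing 𝔸] [NormedAlgebra ℝ 𝔸] {Y : ι → Ω → 𝔸}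

lemma condExp_prod_of_forall_lt [SigmaFiniteFiltration μ 𝓕]
    (hYmeas : ∀ i j, i < j → StronglyMeasurable[𝓕 j] (Y i))
    {s : Finset ι} (hsint : Integrable (∏ i ∈ s, Y i) μ) {k : ι} (hsk : ∀ i ∈ s, i < k) :
    μ[∏ i ∈ s, Y i | 𝓕 k] = ∏ i ∈ s, Y i :=
  condExp_of_stronglyMeasurable (𝓕.le k)
    (s.stronglyMeasurable_prod fun i hi => hYmeas i k (hsk i hi)) hsint

variable [CompleteSpace 𝔸]

lemma condExp_prod_max'_ae_eq_zero (hYmeas : ∀ i j, i < j → StronglyMeasurable[𝓕 j] (Y i))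
    (hYint : ∀ i, Integrable (Y i) μ) (hYzero : ∀ i, μ[Y i | 𝓕 i] =ᵐ[μ] 0)
    {s : Finset ι} (hsint : Integrable (∏ i ∈ s, Y i) μ) (hs : s.Nonempty) :
    μ[∏ i ∈ s, Y i | 𝓕 (s.max' hs)] =ᵐ[μ] 0 := by
  set m := s.max' hs
  have hrest : StronglyMeasurable[𝓕 m] (∏ i ∈ s.erase m, Y i) :=
    (s.erase m).stronglyMeasurable_prod fun i hi =>
      hYmeas i m (s.lt_max'_of_mem_erase_max' hs hi)
  rw [← s.prod_erase_mul Y (s.max'_mem hs)] at hsint ⊢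
  have hpull : μ[(∏ i ∈ s.erase m, Y i) * Y m | 𝓕 m]
      =ᵐ[μ] (∏ i ∈ s.erase m, Y i) * μ[Y m | 𝓕 m] :=
    condExp_bilin_of_stronglyMeasurable_left (.mul ℝ 𝔸) hrest hsint (hYint m)
  filter_upwards [hpull, hYzero m] with ω hω hzero
  rw [hω, Pi.mul_apply, hzero, Pi.zero_apply, mul_zero]

variable [SigmaFiniteFiltration μ 𝓕]

lemma condExp_prod_ae_eq_zero_of_exists_le
    (hYmeas : ∀ i j, i < j → StronglyMeasurable[𝓕 j] (Y i))
    (hYint : ∀ i, Integrable (Y i) μ) (hYzero : ∀ i, μ[Y i | 𝓕 i] =ᵐ[μ] 0)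
    {s : Finset ι} (hsint : Integrable (∏ i ∈ s, Y i) μ) {k : ι} (hsk : ∃ i ∈ s, k ≤ i) :
    μ[∏ i ∈ s, Y i | 𝓕 k] =ᵐ[μ] 0 := by
  obtain ⟨i, his, hki⟩ := hsk
  have hs : s.Nonempty := ⟨i, his⟩
  have hkm : k ≤ s.max' hs := hki.trans (s.le_max' i his)
  calc μ[∏ i ∈ s, Y i | 𝓕 k]
      =ᵐ[μ] μ[μ[∏ i ∈ s, Y i | 𝓕 (s.max' hs)] | 𝓕 k] :=
        (condExp_condExp_of_le (𝓕.mono hkm) (𝓕.le _)).symm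
    _ =ᵐ[μ] μ[0 | 𝓕 k] :=
        condExp_congr_ae (condExp_prod_max'_ae_eq_zero hYmeas hYint hYzero hsint hs)
    _ = 0 := condExp_zero

lemma condExp_prod_comp_of_injective
    (hYmeas : ∀ i j, i < j → StronglyMeasurable[𝓕 j] (Y i))
    (hYint : ∀ i, Integrable (Y i) μ) (hYzero : ∀ i, μ[Y i | 𝓕 i] =ᵐ[μ] 0)
    {κ : Type*} [Fintype κ] {i : κ → ι} (hi : Function.Injective i)
    (hprod : Integrable (∏ j, Y (i j)) μ) (k : ι) :
    μ[∏ j, Y (i j) | 𝓕 k] =ᵐ[μ] if ∀ j, i j < k then ∏ j, Y (i j) else 0 := by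
  have himage : ∏ j, Y (i j) = ∏ l ∈ Finset.univ.image i, Y l :=
    (Finset.prod_image hi.injOn).symm
  rw [himage] at hprod ⊢
  split_ifs with hik
  · exact (condExp_prod_of_forall_lt hYmeas hprod (by simpa using hik)).eventuallyEq
  · exact condExp_prod_ae_eq_zero_of_exists_le hYmeas hYint hYzero hprod (by simpa using hik)

end CondExpProd

lemma integrable_prod_of_memLp_top {Ω κ 𝔸 : Type*} {mΩ : MeasurableSpace Ω} {μ : Measure Ω}
    [IsFiniteMeasure μ] [NormedCommRing 𝔸] [NormOneClass 𝔸] {s : Finset κ} {X : κ → Ω → 𝔸}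
    (hX : ∀ j ∈ s, MemLp (X j) ⊤ μ) : Integrable (∏ j ∈ s, X j) μ := by
  have htop : MemLp (∏ j ∈ s, X j) ⊤ μ := by simpa using MemLp.prod hX
  exact htop.integrable le_top

section PastFiltration

variable {Ω β : Type*} [MeasurableSpace β]

/-- The σ-algebra `σ(Y_0, …, Y_{n-1})` of the strict past of time `n`, presented as the σ-algebra
generated by the vector of the first `n` variables. It is trivial for `n = 0`. -/
abbrev pastSigma (Y : ℕ → Ω → β) (n : ℕ) : MeasurableSpace Ω :=
  MeasurableSpace.comap (fun ω (i : Fin n) => Y i ω) inferInstance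

lemma pastSigma_zero (Y : ℕ → Ω → β) : pastSigma Y 0 = ⊥ := by
  refine le_bot_iff.mp (Measurable.comap_le ?_)
  exact @measurable_of_subsingleton_codomain _ _ ⊥ _ _ _

lemma measurable_pastSigma_of_lt (Y : ℕ → Ω → β) {l n : ℕ} (hln : l < n) :
    Measurable[pastSigma Y n] (Y l) :=
  (measurable_pi_apply (⟨l, hln⟩ : Fin n)).comp
    (comap_measurable fun ω (i : Fin n) => Y i ω)

lemma pastSigma_le {m : MeasurableSpace Ω} {Y : ℕ → Ω → β} {n : ℕ}
    (hY : ∀ l < n, Measurable (Y l)) : pastSigma Y n ≤ m :=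
  (measurable_pi_lambda _ fun i : Fin n => hY i i.isLt).comap_le

/-- The filtration `n ↦ σ(Y_0, …, Y_{n-1})`. With respect to the natural filtration `𝓕` of `Y` it
is shifted by one, so that its value at `n` is `𝓕_{n-1}`. -/
def pastFiltration {mΩ : MeasurableSpace Ω} (Y : ℕ → Ω → β) (hY : ∀ l, Measurable (Y l)) :
    Filtration ℕ mΩ where
  seq := pastSigma Y
  mono' _ _ hmn := pastSigma_le fun _ hl => measurable_pastSigma_of_lt Y (hl.trans_le hmn)
  le' _ := pastSigma_le fun l _ => hY l

end PastFiltration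

lemma multipleInt_eq_sum_s3 {Ω : Type*} (Y : ℕ → Ω → ℝ) {n : ℕ} {f : (Fin n → ℕ) → ℝ}
    {s : Finset (Fin n → ℕ)} (hfs : Function.support f ⊆ s) :
    multipleInt Y f = ∑ i ∈ s with Function.Injective i, f i • ∏ j, Y (i j) := by
  ext ω
  have hzero : ∀ i ∉ s, (if Function.Injective i then f i * ∏ j, Y (i j) ω else 0) = 0 := by
    intro i his
    have hfi : f i = 0 := Function.notMem_support.mp fun h => his (hfs h)
    rw [hfi, zero_mul, ite_self]
  rw [multipleInt, tsum_eq_sum hzero, ← Finset.sum_filter]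
  simp only [Finset.sum_apply, Pi.smul_apply, Finset.prod_apply, smul_eq_mul]

theorem multipleInt_condexp_general {Ω : Type*} {mΩ : MeasurableSpace Ω} {μ : Measure Ω}
    {𝓕 : Filtration ℕ mΩ} [SigmaFiniteFiltration μ 𝓕] {Y : ℕ → Ω → ℝ}
    (hYmeas : ∀ i j, i < j → StronglyMeasurable[𝓕 j] (Y i))
    (hYint : ∀ i, Integrable (Y i) μ) (hYzero : ∀ i, μ[Y i | 𝓕 i] =ᵐ[μ] 0) {n : ℕ}
    (hprod : ∀ i : Fin n → ℕ, Function.Injective i → Integrable (∏ j, Y (i j)) μ)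
    {f : (Fin n → ℕ) → ℝ} (hffin : (Function.support f).Finite) (k : ℕ) :
    μ[multipleInt Y f | 𝓕 k]
      =ᵐ[μ] multipleInt Y (fun i => if ∀ j, i j < k then f i else 0) := by
  have hsupp : Function.support f ⊆ hffin.toFinset := hffin.coe_toFinset.superset
  have hsupp_trunc :
      Function.support (fun i => if ∀ j, i j < k then f i else 0) ⊆ hffin.toFinset := by
    refine fun i hi => hsupp ?_
    contrapose! hi
    simp_all
  rw [multipleInt_eq_sum_s3 Y hsupp, multipleInt_eq_sum_s3 Y hsupp_trunc]
  have hinj : ∀ i ∈ hffin.toFinset.filter Function.Injective, Function.Injective i :=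
    fun i hi => (Finset.mem_filter.mp hi).2
  refine (condExp_finsetSum (fun i hi => (hprod i (hinj i hi)).smul (f i)) (𝓕 k)).trans ?_
  refine eventuallyEq_sum fun i hi => (condExp_smul _ _ _).trans ?_
  filter_upwards [condExp_prod_comp_of_injective hYmeas hYint hYzero (hinj i hi)
    (hprod i (hinj i hi)) k] with ω hω
  rw [Pi.smul_apply, hω]
  split_ifs <;> simp

/-- **Conditional expectation of a multiple stochastic integral.**
`𝓕 n` plays the role of the σ-algebra `𝓕_{n-1}` of the paper (so the paper's `𝓕_k`
is `𝓕 (k+1)` here).  For `n ≥ 1` and `f_n : ℕⁿ → ℝ` symmetric with finite support,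
`E[J_n(f_n) | 𝓕_k] = J_n(f_n · 1_{[0,k]ⁿ})` almost surely. -/
theorem multipleInt_condexp
    {Ω : Type*} {mΩ : MeasurableSpace Ω} (μ : Measure Ω) [IsProbabilityMeasure μ]
    (Y : ℕ → Ω → ℝ) (hYmeas : ∀ k, Measurable (Y k))
    (hYbdd : ∀ k, ∃ C : ℝ, ∀ ω, |Y k ω| ≤ C)
    (𝓕 : ℕ → MeasurableSpace Ω)
    (h𝓕0 : 𝓕 0 = ⊥)
    (h𝓕succ : ∀ n, 𝓕 (n + 1) =
      MeasurableSpace.comap (fun ω (i : Fin (n + 1)) => Y i ω) inferInstance)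
    (h𝓕le : ∀ n, 𝓕 n ≤ mΩ)
    (hY0 : ∀ n, μ[Y n | 𝓕 n] =ᵐ[μ] 0)
    (hY1 : ∀ n, μ[fun ω => (Y n ω) ^ 2 | 𝓕 n] =ᵐ[μ] fun _ => 1)
    (n : ℕ) (hn : 1 ≤ n)
    (f : (Fin n → ℕ) → ℝ)
    (hfsymm : ∀ (σ : Equiv.Perm (Fin n)) (i : Fin n → ℕ), f (i ∘ σ) = f i)
    (hffin : (Function.support f).Finite)
    (k : ℕ) :
    μ[multipleInt Y f | 𝓕 (k + 1)]
      =ᵐ[μ] multipleInt Y (fun i => if ∀ j, i j ≤ k then f i else 0) := by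
  obtain rfl : 𝓕 = pastFiltration Y hYmeas := by
    funext m
    cases m with
    | zero => exact h𝓕0.trans (pastSigma_zero Y).symm
    | succ m => exact h𝓕succ m
  have hYtop (l : ℕ) : MemLp (Y l) ⊤ μ := by
    obtain ⟨C, hC⟩ := hYbdd l
    exact memLp_top_of_bound (hYmeas l).aestronglyMeasurable C (.of_forall hC)
  simpa only [Order.lt_add_one_iff] using multipleInt_condexp_general
    (fun l m hlm => (measurable_pastSigma_of_lt Y hlm).stronglyMeasurable)
    (fun l => (hYtop l).integrable le_top) hY0
    (fun i _ => integrable_prod_of_memLp_top fun j _ => hYtop (i j)) hffin (k + 1)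
end

section
/- For all real numbers p with 0 ≤ p ≤ 1, q = 1 − p, and all t, a ∈ ℝ: p·t·e^t + q·a·e^a − (p·e^t + q·e^a)·log(p·e^t + q·e^a) ≤ p·q·( q·e^a·((t−a)·e^{t−a} − e^{t−a} + 1) + p·e^t·((a−t)·e^{a−t} − e^{a−t} + 1) ). -/
/-!
Divide by `e^a` and put `x = e^(t - a)`. The claim becomes the nonnegativity on `(0, ∞)` of
`F x = p q (q φ(x) + p x φ(1/x)) - (p φ(x) - φ(p x + q))`, where `φ x = x log x + 1 - x` is
`InformationTheory.klFun`: the entropy on the left-hand side is a Jensen gap, which does not see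
the affine part of `φ`. Now `F 1 = F' 1 = 0`, and `F` is convex because
`F'' x = (p q (x - 1))² / (x² (p x + q))`, so `1` minimizes `F`.
-/

open InformationTheory Real Set Topology

section TwoPoint

variable {p q x y : ℝ}

lemma klFun_exp (x : ℝ) : klFun (exp x) = x * exp x - exp x + 1 := by
  rw [klFun_apply, log_exp]
  ring

lemma mul_klFun_div (x : ℝ) (hy : y ≠ 0) :
    y * klFun (x / y) = x * log x - x * log y + y - x := by
  rcases eq_or_ne x 0 with rfl | hx
  · simp [klFun_zero]
  · rw [klFun_apply, log_div hx hy]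
    field_simp

lemma mul_klFun_inv (hx : x ≠ 0) : x * klFun x⁻¹ = x - 1 - log x := by
  rw [← one_div, mul_klFun_div 1 hx, log_one]
  ring

lemma hasDerivAt_mul_klFun_inv (hx : x ≠ 0) :
    HasDerivAt (fun z ↦ z * klFun z⁻¹) (1 - x⁻¹) x := by
  refine (((hasDerivAt_id x).sub_const 1).sub (hasDerivAt_log hx)).congr_of_eventuallyEq ?_
  filter_upwards [isOpen_ne.mem_nhds hx] with z hz using mul_klFun_inv hz

lemma mul_log_jensen_gap_eq (hpq : p + q = 1) (x : ℝ) (hy : y ≠ 0) :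
    p * (x * log x) + q * (y * log y) - (p * x + q * y) * log (p * x + q * y)
      = y * (p * klFun (x / y) - klFun (p * (x / y) + q)) := by
  have hmean : p * (x / y) + q = (p * x + q * y) / y := by field_simp
  rw [hmean, mul_sub, mul_left_comm y p, mul_klFun_div _ hy, mul_klFun_div _ hy]
  linear_combination -y * hpq

lemma mul_add_pos_of_add_eq_one (hp : 0 ≤ p) (hq : 0 ≤ q) (hpq : p + q = 1) (hx : 0 < x) :
    0 < p * x + q := by
  simpa using convex_Ioi (0 : ℝ) hx (mem_Ioi.2 one_pos) hp hq hpq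

/-- The difference of the two sides of the two-point logarithmic Sobolev inequality, for the
function taking the values `x` with weight `p` and `1` with weight `q`. The term
`p * klFun x - klFun (p * x + q)` is the entropy of this function, since `klFun 1 = 0`. -/
noncomputable def logSobolevDeficit (p q x : ℝ) : ℝ :=
  p * q * (q * klFun x + p * (x * klFun x⁻¹)) - (p * klFun x - klFun (p * x + q))

lemma logSobolevDeficit_one (hpq : p + q = 1) : logSobolevDeficit p q 1 = 0 := by
  simp [logSobolevDeficit, hpq, klFun_one]

lemma hasDerivAt_logSobolevDeficit (hx : x ≠ 0) (hm : p * x + q ≠ 0) :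
    HasDerivAt (logSobolevDeficit p q)
      (p * q * (q * log x + p * (1 - x⁻¹)) - p * (log x - log (p * x + q))) x := by
  have hkl := hasDerivAt_klFun hx
  have hmean : HasDerivAt (fun z ↦ klFun (p * z + q)) (log (p * x + q) * p) x :=
    HasDerivAt.comp (h₂ := klFun) x (hasDerivAt_klFun hm) ((hasDerivAt_const_mul p).add_const q)
  have hderiv := (((hkl.const_mul q).add
    ((hasDerivAt_mul_klFun_inv hx).const_mul p)).const_mul (p * q)).sub
    ((hkl.const_mul p).sub hmean)
  exact hderiv.congr_deriv (by ring)

lemma hasDerivAt_deriv_logSobolevDeficit (hpq : p + q = 1) (hx : x ≠ 0) (hm : p * x + q ≠ 0) :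
    HasDerivAt (deriv (logSobolevDeficit p q))
      ((p * q * (x - 1)) ^ 2 / (x ^ 2 * (p * x + q))) x := by
  have hm_near : ∀ᶠ z in 𝓝 x, p * z + q ≠ 0 :=
    ContinuousAt.eventually_ne (by fun_prop) hm
  have hderiv_eq : deriv (logSobolevDeficit p q) =ᶠ[𝓝 x]
      fun z ↦ p * q * (q * log z + p * (1 - z⁻¹)) - p * (log z - log (p * z + q)) := by
    filter_upwards [isOpen_ne.mem_nhds hx, hm_near] with z hz hmz
      using (hasDerivAt_logSobolevDeficit hz hmz).deriv
  have hlog := hasDerivAt_log hx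
  have hderiv := (((hlog.const_mul q).add
    (((hasDerivAt_inv hx).const_sub 1).const_mul p)).const_mul (p * q)).sub
    ((hlog.sub (((hasDerivAt_const_mul p).add_const q).log hm)).const_mul p)
  refine (hderiv.congr_of_eventuallyEq hderiv_eq).congr_deriv ?_
  obtain rfl : q = 1 - p := by linarith
  field_simp
  ring

lemma convexOn_logSobolevDeficit (hp : 0 ≤ p) (hq : 0 ≤ q) (hpq : p + q = 1) :
    ConvexOn ℝ (Ioi 0) (logSobolevDeficit p q) := by
  have hm {x : ℝ} (hx : 0 < x) : 0 < p * x + q := mul_add_pos_of_add_eq_one hp hq hpq hx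
  have hdiff (x : ℝ) (hx : 0 < x) : DifferentiableAt ℝ (logSobolevDeficit p q) x :=
    (hasDerivAt_logSobolevDeficit hx.ne' (hm hx).ne').differentiableAt
  have hderiv2 (x : ℝ) (hx : 0 < x) :=
    hasDerivAt_deriv_logSobolevDeficit hpq hx.ne' (hm hx).ne'
  refine convexOn_of_deriv2_nonneg' (convex_Ioi 0)
    (fun x hx ↦ (hdiff x hx).differentiableWithinAt)
    (fun x hx ↦ (hderiv2 x hx).differentiableAt.differentiableWithinAt) fun x hx ↦ ?_
  have hmx := hm hx
  calc
    0 ≤ (p * q * (x - 1)) ^ 2 / (x ^ 2 * (p * x + q)) := by positivity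
    _ = deriv^[2] (logSobolevDeficit p q) x := (hderiv2 x hx).deriv.symm

lemma isMinOn_logSobolevDeficit (hp : 0 ≤ p) (hq : 0 ≤ q) (hpq : p + q = 1) :
    IsMinOn (logSobolevDeficit p q) (Ioi 0) 1 := by
  have hderiv : HasDerivAt (logSobolevDeficit p q) 0 1 := by
    simpa [hpq] using
      hasDerivAt_logSobolevDeficit (p := p) (q := q) one_ne_zero (by simp [hpq])
  exact (convexOn_logSobolevDeficit hp hq hpq).isMinOn_of_rightDeriv_eq_zero (by simp)
    (hderiv.hasDerivWithinAt.derivWithin (uniqueDiffWithinAt_Ioi 1))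

lemma logSobolevDeficit_nonneg (hp : 0 ≤ p) (hq : 0 ≤ q) (hpq : p + q = 1) (hx : 0 < x) :
    0 ≤ logSobolevDeficit p q x :=
  logSobolevDeficit_one hpq ▸ isMinOn_logSobolevDeficit hp hq hpq hx

theorem mul_log_jensen_gap_le (hp : 0 ≤ p) (hq : 0 ≤ q) (hpq : p + q = 1) (hx : 0 < x)
    (hy : 0 < y) :
    p * (x * log x) + q * (y * log y) - (p * x + q * y) * log (p * x + q * y)
      ≤ p * q * (q * (y * klFun (x / y)) + p * (x * klFun (y / x))) := by
  have hdeficit := logSobolevDeficit_nonneg hp hq hpq (div_pos hx hy)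
  rw [logSobolevDeficit, sub_nonneg, inv_div] at hdeficit
  calc
    _ = y * (p * klFun (x / y) - klFun (p * (x / y) + q)) :=
      mul_log_jensen_gap_eq hpq x hy.ne'
    _ ≤ y * (p * q * (q * klFun (x / y) + p * (x / y * klFun (y / x)))) := by gcongr
    _ = p * q * (q * (y * klFun (x / y)) + p * (x * klFun (y / x))) := by field_simp

end TwoPoint

/-- **One-dimensional sharp logarithmic Sobolev lemma.**  For `0 ≤ p ≤ 1`, `q = 1 - p`
and all `t, a ∈ ℝ`:
`p t e^t + q a e^a - (p e^t + q e^a) log(p e^t + q e^a)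
  ≤ p q (q e^a ((t-a) e^{t-a} - e^{t-a} + 1) + p e^t ((a-t) e^{a-t} - e^{a-t} + 1))`. -/
theorem one_dim_sharp_log_sobolev_ineq
    (p q t a : ℝ) (hp0 : 0 ≤ p) (hp1 : p ≤ 1) (hq : q = 1 - p) :
    p * t * Real.exp t + q * a * Real.exp a
        - (p * Real.exp t + q * Real.exp a) * Real.log (p * Real.exp t + q * Real.exp a)
      ≤ p * q *
          (q * Real.exp a * ((t - a) * Real.exp (t - a) - Real.exp (t - a) + 1)
            + p * Real.exp t * ((a - t) * Real.exp (a - t) - Real.exp (a - t) + 1)) := by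
  have hgap := mul_log_jensen_gap_le hp0 (by linarith : 0 ≤ q) (by linarith : p + q = 1)
    (Real.exp_pos t) (Real.exp_pos a)
  rw [← Real.exp_sub, ← Real.exp_sub, klFun_exp, klFun_exp, Real.log_exp, Real.log_exp] at hgap
  linarith
end
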